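/- arXiv:math/0611923 — 2 statements merged into one kernel-verified Lean document; each statement's English description precedes it below -/
import Mathlib

section
/- For every n ≥ 1, the number of permutations π ∈ S_n that avoid the generalized pattern 1-23 and satisfy π_n = 1 equals the Bell number B_{n-1}; and for every k with 2 ≤ k ≤ n, the number of permutations π ∈ S_n that avoid 1-23 and satisfy π_n = k equals ∇^{k-2}(B_{n-1}) = Σ_{i=0}^{k-2} (-1)^i · C(k-2, i) · B_{n-1-i}. -/
/-!
Deleting the last letter of a permutation and standardising the rest gives a bijection between the
permutations of `Fin (n + 1)` with last value `k` and the permutations `σ` of `Fin n`; its inverse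
is `appendLast k`. A new occurrence of 1-23 can only use the last two positions, and it exists
exactly when the last value of `σ` is below `k` and is not the minimum. Hence, with values counted
from `0`, writing `A n` for the number of avoiders of size `n` and `a n k` for the number of those
of size `n + 1` with last value `k`,

* `a n 0 = A n`,
* `a (n + 1) k = #{σ avoiding, of size n + 1, with last value 0 or ≥ k}`.

The second identity gives `a (n + 1) 1 = A (n + 1)`, `a (n + 1) (n + 1) = A n`, and the Pascal-like
rule `a (n + 1) k = a (n + 1) (k + 1) + a n k` for `1 ≤ k ≤ n`. Solving the rule from the diagonal
gives `a (k + 1 + r) (k + 1) = ∑ C(r, i) A (k + i)`, which for `k = 0` is the Bell recurrence for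
`A`. Solving it from the column `k = 1` gives the iterated backward differences.

The Bell recurrence for the number of setoids comes from the bijection sending a setoid on
`Option α` to the set of elements not related to `none`, together with the restricted setoid.
-/

/-- `π` avoids the generalized pattern 1-23. -/
def Avoids1d23 {n : ℕ} (π : Equiv.Perm (Fin n)) : Prop :=
  ¬ ∃ (i j : Fin n) (h : j.1 + 1 < n), i < j ∧ π i < π j ∧ π j < π ⟨j.1 + 1, h⟩

/-- The `m`-th Bell number: the number of partitions of a set with `m` elements,
equivalently the number of equivalence relations (setoids) on `Fin m`. -/
noncomputable def bell (m : ℕ) : ℕ := Nat.card (Setoid (Fin m))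

open Finset

/-! ### The Bell recurrence for setoids -/

/-- The setoid on `Option α` in which `none` is related exactly to the elements outside `s`, and
which restricts to `r` on `s`. -/
def glueSetoid {α : Type*} (s : Set α) (r : Setoid s) : Setoid (Option α) where
  r x y := (∀ a ∈ x, ∀ h : a ∈ s, ∃ b ∈ y, ∃ h' : b ∈ s, r ⟨a, h⟩ ⟨b, h'⟩) ∧
    (∀ b ∈ y, ∀ h : b ∈ s, ∃ a ∈ x, ∃ h' : a ∈ s, r ⟨a, h'⟩ ⟨b, h⟩)
  iseqv := by
    refine ⟨fun x => ⟨fun a ha h => ⟨a, ha, h, r.refl _⟩, fun a ha h => ⟨a, ha, h, r.refl _⟩⟩,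
      fun {x y} h => ⟨fun a ha hs => ?_, fun a ha hs => ?_⟩,
      fun {x y z} h1 h2 => ⟨fun a ha hs => ?_, fun a ha hs => ?_⟩⟩
    · obtain ⟨b, hb, hb', hr⟩ := h.2 a ha hs
      exact ⟨b, hb, hb', r.symm hr⟩
    · obtain ⟨b, hb, hb', hr⟩ := h.1 a ha hs
      exact ⟨b, hb, hb', r.symm hr⟩
    · obtain ⟨b, hb, hb', hr⟩ := h1.1 a ha hs
      obtain ⟨c, hc, hc', hr'⟩ := h2.1 b hb hb'
      exact ⟨c, hc, hc', r.trans hr hr'⟩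
    · obtain ⟨b, hb, hb', hr⟩ := h2.2 a ha hs
      obtain ⟨c, hc, hc', hr'⟩ := h1.2 b hb hb'
      exact ⟨c, hc, hc', r.trans hr' hr⟩

lemma glueSetoid_apply {α : Type*} (s : Set α) (r : Setoid s) (x y : Option α) :
    glueSetoid s r x y ↔
      (∀ a ∈ x, ∀ h : a ∈ s, ∃ b ∈ y, ∃ h' : b ∈ s, r ⟨a, h⟩ ⟨b, h'⟩) ∧
      (∀ b ∈ y, ∀ h : b ∈ s, ∃ a ∈ x, ∃ h' : a ∈ s, r ⟨a, h'⟩ ⟨b, h⟩) := Iff.rfl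

/-- A setoid on `Option α` is the set of elements of `α` lying outside the class of `none`,
together with a setoid on that set. -/
def setoidOptionEquiv (α : Type*) :
    Setoid (Option α) ≃ Σ s : Set α, Setoid s where
  toFun r := ⟨{a | ¬ r none (some a)}, r.comap fun a => some a.1⟩
  invFun p := glueSetoid p.1 p.2
  left_inv r := by
    have hs : ∀ {x y}, r x y → r y x := r.symm
    have ht : ∀ {x y z}, r x y → r y z → r x z := r.trans
    refine Setoid.ext fun x y => ?_
    rw [glueSetoid_apply]
    rcases x with _ | x <;> rcases y with _ | y
    · simp
    · simp
    · simp [r.comm]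
    · simp only [Option.mem_def, Option.some.injEq, Set.mem_ofPred_eq, Setoid.comap_rel,
        exists_eq_left', forall_eq']
      constructor
      · rintro ⟨h1, h2⟩
        by_cases hx : r none (some x)
        · by_cases hy : r none (some y)
          · exact ht (hs hx) hy
          · exact (h2 hy).2
        · exact (h1 hx).2
      · intro h
        exact ⟨fun hx => ⟨fun hy => hx (ht hy (hs h)), h⟩, fun hy => ⟨fun hx => hy (ht hx h), h⟩⟩
  right_inv := by
    rintro ⟨s, r⟩
    have key : ∀ (t : Set α) (q : Setoid t), (h : t = s) →
        (∀ a b : α, ∀ ha : a ∈ s, ∀ hb : b ∈ s, q ⟨a, h ▸ ha⟩ ⟨b, h ▸ hb⟩ ↔ r ⟨a, ha⟩ ⟨b, hb⟩) →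
        (⟨t, q⟩ : Σ s : Set α, Setoid s) = ⟨s, r⟩ := by
      rintro t q rfl h
      congr 1
      exact Setoid.ext fun a b => h a.1 b.1 a.2 b.2
    apply key
    · intro a b ha hb
      rw [Setoid.comap_rel, glueSetoid_apply]
      simp [ha, hb]
    · ext a
      simp [glueSetoid_apply]

lemma bell_zero' : bell 0 = 1 := by
  have : Unique (Setoid (Fin 0)) := ⟨⟨⊤⟩, fun a => by ext x; exact x.elim0⟩
  exact Nat.card_unique

lemma card_setoid_eq_bell (α : Type*) [Finite α] : Nat.card (Setoid α) = bell (Nat.card α) := by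
  have e := Finite.equivFin α
  refine Nat.card_congr ⟨fun r => r.comap e.symm, fun r => r.comap e, fun r => ?_, fun r => ?_⟩ <;>
  · ext x y
    simp [Setoid.comap_rel]

lemma bell_succ' (m : ℕ) : bell (m + 1) = ∑ i ∈ range (m + 1), m.choose i * bell i := by
  classical
  have h1 : bell (m + 1) = Nat.card (Setoid (Option (Fin m))) := by
    rw [card_setoid_eq_bell]; simp
  have : ∀ s : Set (Fin m), Finite (Setoid s) := fun s =>
    Finite.of_injective (fun r : Setoid s => fun x y => r x y) fun r r' h =>
      Setoid.ext fun x y => by simpa using congrFun (congrFun h x) y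
  rw [h1, Nat.card_congr (setoidOptionEquiv (Fin m)),
    Nat.card_congr (Equiv.sigmaCongrLeft' (Fintype.finsetEquivSet (α := Fin m)).symm),
    Nat.card_sigma]
  have h2 : ∀ s : Finset (Fin m),
      Nat.card (Setoid (Fintype.finsetEquivSet s : Set (Fin m))) = bell s.card := by
    intro s
    rw [card_setoid_eq_bell]
    simp
  simp only [Equiv.symm_symm, h2]
  have := Finset.sum_powerset_apply_card bell (x := (univ : Finset (Fin m)))
  simpa using this

/-! ### Appending a last letter -/

/-- The permutation with last value `k` whose other values are in the relative order given by
`σ`. -/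
def appendLast {n : ℕ} (k : Fin (n + 1)) (σ : Equiv.Perm (Fin n)) : Equiv.Perm (Fin (n + 1)) :=
  ((finSuccEquiv' (Fin.last n)).trans (Equiv.optionCongr σ)).trans (finSuccEquiv' k).symm

@[simp] lemma appendLast_last {n : ℕ} (k : Fin (n + 1)) (σ : Equiv.Perm (Fin n)) :
    appendLast k σ (Fin.last n) = k := by
  simp [appendLast]

@[simp] lemma appendLast_castSucc {n : ℕ} (k : Fin (n + 1)) (σ : Equiv.Perm (Fin n)) (i : Fin n) :
    appendLast k σ i.castSucc = k.succAbove (σ i) := by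
  simp [appendLast, finSuccEquiv'_last_apply_castSucc]

lemma appendLast_injective {n : ℕ} (k : Fin (n + 1)) :
    Function.Injective (appendLast k) := by
  intro σ τ h
  ext i : 1
  have := congrArg (fun π => π i.castSucc) h
  simpa using this

lemma exists_appendLast {n : ℕ} (π : Equiv.Perm (Fin (n + 1))) :
    ∃ σ, appendLast (π (Fin.last n)) σ = π := by
  set k := π (Fin.last n) with hk
  let e : Option (Fin n) ≃ Option (Fin n) :=
    ((finSuccEquiv' (Fin.last n)).symm.trans π).trans (finSuccEquiv' k)
  have he : e none = none := by simp [e, ← hk]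
  refine ⟨Equiv.removeNone e, ?_⟩
  have h2 : Equiv.optionCongr (Equiv.removeNone e) = e := by
    ext1 x
    rcases x with _ | x
    · simp [he]
    · simp only [Equiv.optionCongr_apply, Option.map_some]
      apply Equiv.removeNone_some
      rcases h : e (some x) with _ | y
      · exact absurd (e.injective (h.trans he.symm)) (by simp)
      · exact ⟨y, rfl⟩
  rw [appendLast, h2]
  ext x
  simp [e]

/-- Appending a last letter creates an occurrence of 1-23 only in the last two positions. -/
lemma avoids_appendLast {n : ℕ} (k : Fin (n + 1)) (σ : Equiv.Perm (Fin n)) :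
    Avoids1d23 (appendLast k σ) ↔ Avoids1d23 σ ∧
      ∀ i j : Fin n, j.1 + 1 = n → i < j → σ i < σ j → ¬ (σ j).1 < k.1 := by
  unfold Avoids1d23
  constructor
  · intro h
    constructor
    · rintro ⟨i, j, hj, hij, h1, h2⟩
      have hj' := j.2
      refine h ⟨i.castSucc, j.castSucc, by simp [hj'], by simpa using hij, by simpa using h1, ?_⟩
      have : (⟨j.castSucc.1 + 1, by simp [hj']⟩ : Fin (n + 1)) =
        Fin.castSucc ⟨j.1 + 1, hj⟩ := rfl
      rw [this, appendLast_castSucc, appendLast_castSucc]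
      exact Fin.succAbove_lt_succAbove_iff.2 h2
    · intro i j hj hij h1 h2
      have hj' := j.2
      refine h ⟨i.castSucc, j.castSucc, by simp [hj'], by simpa using hij, by simpa using h1, ?_⟩
      have : (⟨j.castSucc.1 + 1, by simp [hj']⟩ : Fin (n + 1)) = Fin.last n := by
        ext; simpa using hj
      rw [this, appendLast_castSucc, appendLast_last, Fin.succAbove_lt_iff_castSucc_lt]
      exact h2
  · rintro ⟨h, h'⟩ ⟨i, j, hj, hij, h1, h2⟩
    obtain ⟨j, rfl⟩ : ∃ j', j = Fin.castSucc j' := ⟨⟨j.1, by omega⟩, rfl⟩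
    obtain ⟨i, rfl⟩ : ∃ j', i = Fin.castSucc j' := ⟨⟨i.1, by have := Fin.lt_def.1 hij; omega⟩, rfl⟩
    by_cases hjn : j.1 + 1 = n
    · apply h' i j hjn (by simpa using hij) (by simpa using h1)
      have : (⟨j.castSucc.1 + 1, hj⟩ : Fin (n + 1)) = Fin.last n := by
        ext; simpa using hjn
      rw [this, appendLast_castSucc, appendLast_last, Fin.succAbove_lt_iff_castSucc_lt] at h2
      exact h2
    · have hj' : j.1 + 1 < n := by omega
      have : (⟨j.castSucc.1 + 1, hj⟩ : Fin (n + 1)) = Fin.castSucc ⟨j.1 + 1, hj'⟩ := rfl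
      rw [this, appendLast_castSucc, appendLast_castSucc, Fin.succAbove_lt_succAbove_iff] at h2
      exact h ⟨i, j, hj', by simpa using hij, by simpa using h1, h2⟩

lemma avoids_appendLast_succ {n : ℕ} (k : Fin (n + 2)) (σ : Equiv.Perm (Fin (n + 1))) :
    Avoids1d23 (appendLast k σ) ↔ Avoids1d23 σ ∧
      ((σ (Fin.last n)).1 = 0 ∨ k.1 ≤ (σ (Fin.last n)).1) := by
  rw [avoids_appendLast]
  refine and_congr_right fun _ => ?_
  constructor
  · intro h
    by_contra! hc
    obtain ⟨h0, hk⟩ := hc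
    -- The position of the minimum serves as the first letter of the pattern.
    have hs : σ (σ.symm 0) < σ (Fin.last n) := by
      simp only [Equiv.apply_symm_apply, Fin.lt_def, Fin.val_zero]; omega
    refine h (σ.symm 0) (Fin.last n) (by simp) ?_ hs hk
    refine lt_of_le_of_ne (Fin.le_last _) fun h => ?_
    rw [h] at hs
    exact lt_irrefl _ hs
  · intro h i j hj hij h1 h2
    obtain rfl : j = Fin.last n := by ext; simpa using hj
    have := Fin.lt_def.1 h1
    omega

/-! ### Counting avoiders by last value -/

open Classical in
/-- The permutations of `Fin n` avoiding 1-23. -/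
noncomputable def avoiders (n : ℕ) : Finset (Equiv.Perm (Fin n)) := {π | Avoids1d23 π}

/-- The number of avoiders of size `n + 1` with last value `k`, values being counted from `0`. -/
noncomputable def lastCount (n k : ℕ) : ℕ := #{π ∈ avoiders (n + 1) | (π (Fin.last n)).1 = k}

open Classical in
lemma lastCount_eq {n k : ℕ} (hk : k < n + 1) :
    lastCount n k = #{σ : Equiv.Perm (Fin n) | Avoids1d23 (appendLast ⟨k, hk⟩ σ)} := by
  symm
  refine Finset.card_bij (fun σ _ => appendLast ⟨k, hk⟩ σ) ?_ ?_ ?_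
  · intro σ hσ
    simpa [avoiders] using hσ
  · intro σ _ τ _ h
    exact appendLast_injective _ h
  · intro π hπ
    simp only [avoiders, mem_filter, mem_univ, true_and] at hπ ⊢
    obtain ⟨σ, hσ⟩ := exists_appendLast π
    have : π (Fin.last n) = ⟨k, hk⟩ := Fin.ext hπ.2
    rw [this] at hσ
    exact ⟨σ, hσ ▸ hπ.1, hσ⟩

lemma lastCount_zero (n : ℕ) : lastCount n 0 = #(avoiders n) := by
  rw [lastCount_eq (Nat.succ_pos n), avoiders]
  congr 1
  ext σ
  simp only [mem_filter, mem_univ, true_and]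
  rw [avoids_appendLast]
  exact and_iff_left fun i j _ _ _ => Nat.not_lt_zero _

lemma lastCount_succ {n k : ℕ} (hk : k ≤ n + 1) : lastCount (n + 1) k =
    #{σ ∈ avoiders (n + 1) | (σ (Fin.last n)).1 = 0 ∨ k ≤ (σ (Fin.last n)).1} := by
  classical
  rw [lastCount_eq (Nat.lt_succ_of_le hk), avoiders, filter_filter]
  simp only [avoids_appendLast_succ]

lemma lastCount_one (n : ℕ) : lastCount (n + 1) 1 = #(avoiders (n + 1)) := by
  rw [lastCount_succ (by omega), filter_true_of_mem]
  intros; omega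

lemma lastCount_diag (n : ℕ) : lastCount (n + 1) (n + 1) = #(avoiders n) := by
  rw [lastCount_succ le_rfl, ← lastCount_zero, lastCount]
  congr 1
  ext σ
  have := (σ (Fin.last n)).2
  simp only [mem_filter]
  refine and_congr_right fun _ => by omega

lemma lastCount_rec {n k : ℕ} (h1 : 1 ≤ k) (hk : k ≤ n) :
    lastCount (n + 1) k = lastCount (n + 1) (k + 1) + lastCount n k := by
  classical
  rw [lastCount_succ (by omega), lastCount_succ (by omega), lastCount, ← card_union_of_disjoint]
  · congr 1
    ext σ
    simp only [mem_filter, mem_union]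
    rw [← and_or_left]
    refine and_congr_right fun _ => by omega
  · rw [disjoint_left]
    intro σ
    simp only [mem_filter]
    omega

/-- Solution of `lastCount_rec` from the diagonal values `lastCount_diag`. -/
lemma lastCount_eq_sum (r k : ℕ) : lastCount (k + 1 + r) (k + 1) =
    ∑ i ∈ range (r + 1), r.choose i * #(avoiders (k + i)) := by
  induction r generalizing k with
  | zero => simp [lastCount_diag]
  | succ r ih =>
    have h := sum_choose_succ_mul (R := ℕ) (fun i _ => #(avoiders (k + i))) r
    simp only [Nat.cast_id] at h
    rw [h, ← add_assoc, lastCount_rec (by omega) (by omega), ih k,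
      show k + 1 + r + 1 = (k + 1) + 1 + r by ring, ih (k + 1), add_comm]
    congr 1
    refine sum_congr rfl fun i _ => ?_
    rw [show k + 1 + i = k + (i + 1) by ring]

lemma card_avoiders (n : ℕ) : #(avoiders n) = bell n := by
  induction n using Nat.strong_induction_on with
  | _ n ih =>
    rcases n with _ | n
    · have h : avoiders 0 = univ := by
        ext π
        simp only [avoiders, mem_filter, mem_univ, true_and, iff_true]
        rintro ⟨i, -⟩
        exact i.elim0
      rw [bell_zero', h]
      simp
    · rw [bell_succ', ← lastCount_one]
      have := lastCount_eq_sum n 0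
      rw [show 0 + 1 + n = n + 1 by ring] at this
      rw [this]
      refine sum_congr rfl fun i hi => ?_
      rw [zero_add, ih i (by simpa using hi)]

/-- Solution of `lastCount_rec` from the column `lastCount_one`. -/
lemma lastCount_eq_diff (k n : ℕ) (h : k + 1 ≤ n) : (lastCount n (k + 1) : ℤ) =
    ∑ i ∈ range (k + 1), (-1 : ℤ) ^ i * (k.choose i) * (bell (n - i) : ℤ) := by
  induction k generalizing n with
  | zero =>
    obtain ⟨n, rfl⟩ : ∃ m, n = m + 1 := ⟨n - 1, by omega⟩
    simp [lastCount_one, card_avoiders]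
  | succ k ih =>
    obtain ⟨n, rfl⟩ : ∃ m, n = m + 1 := ⟨n - 1, by omega⟩
    have hr := lastCount_rec (n := n) (k := k + 1) (by omega) (by omega)
    have hr' : (lastCount (n + 1) (k + 1 + 1) : ℤ) =
        lastCount (n + 1) (k + 1) - lastCount n (k + 1) := by
      rw [hr]; push_cast; ring
    have hs := sum_choose_succ_mul (R := ℤ) (fun i _ => (-1 : ℤ) ^ i * (bell (n + 1 - i) : ℤ)) k
    rw [hr', ih (n + 1) (by omega), ih n (by omega)]
    have hc : ∀ m, ∑ i ∈ range (m + 1), (-1 : ℤ) ^ i * (m.choose i) * (bell (n + 1 - i) : ℤ) =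
        ∑ i ∈ range (m + 1), (m.choose i : ℤ) * ((-1 : ℤ) ^ i * (bell (n + 1 - i) : ℤ)) :=
      fun m => sum_congr rfl fun i _ => by ring
    rw [hc, hc, hs, sub_eq_add_neg, ← sum_neg_distrib]
    congr 1
    refine sum_congr rfl fun i _ => ?_
    rw [Nat.add_sub_add_right]
    ring

lemma card_subtype_eq_lastCount (n k : ℕ) (hk : k < n + 1) :
    Nat.card {π : Equiv.Perm (Fin (n + 1)) // Avoids1d23 π ∧ π (Fin.last n) = ⟨k, hk⟩} =
      lastCount n k := by
  classical
  rw [Nat.card_eq_fintype_card, Fintype.card_subtype, lastCount, avoiders, filter_filter]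
  simp only [Fin.ext_iff]

theorem bell_distribution (n : ℕ) (hn : 1 ≤ n) :
    Nat.card {π : Equiv.Perm (Fin n) // Avoids1d23 π ∧ π ⟨n - 1, by omega⟩ = ⟨0, by omega⟩} = bell (n - 1) ∧
    ∀ k : ℕ, (hk1 : 2 ≤ k) → (hk2 : k ≤ n) →
      (Nat.card {π : Equiv.Perm (Fin n) // Avoids1d23 π ∧ π ⟨n - 1, by omega⟩ = ⟨k - 1, by omega⟩} : ℤ) =
        ∑ i ∈ Finset.range (k - 1), (-1 : ℤ) ^ i * (((k - 2)).choose i) * (bell (n - 1 - i) : ℤ) := by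
  obtain ⟨n, rfl⟩ : ∃ m, n = m + 1 := ⟨n - 1, by omega⟩
  constructor
  · exact (card_subtype_eq_lastCount n 0 (by omega)).trans
      ((lastCount_zero n).trans (card_avoiders n))
  · intro k hk1 hk2
    obtain ⟨k, rfl⟩ : ∃ m, k = m + 2 := ⟨k - 2, by omega⟩
    exact (congrArg _ (card_subtype_eq_lastCount n (k + 1) (by omega))).trans
      (lastCount_eq_diff k n (by omega))
end

section
/- Let a_{n,k} denote the number of permutations π ∈ S_n that avoid both generalized patterns 1-23 and 21-3 and satisfy π_n = k. Then for all n ≥ 3 and all k with 3 ≤ k ≤ n, one has a_{n,k-1} = a_{n,k} + a_{n-1,k-1} + a_{n-2,k-2} (equivalently, a_{n,k} = a_{n,k-1} - a_{n-1,k-1} - a_{n-2,k-2}). -/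
/-- `π` avoids the generalized pattern 21-3. -/
def Avoids21d3 {n : ℕ} (π : Equiv.Perm (Fin n)) : Prop :=
  ¬ ∃ (i j : Fin n) (h : i.1 + 1 < n), i.1 + 1 < j.1 ∧ π ⟨i.1 + 1, h⟩ < π i ∧ π i < π j

/-- `a n k` is the number of permutations of `S n` avoiding both `1-23` and `21-3`
whose last entry equals `k`. -/
noncomputable def a (n k : ℕ) : ℕ :=
  Nat.card {π : Equiv.Perm (Fin n) // Avoids1d23 π ∧ Avoids21d3 π ∧
    ∃ h : n - 1 < n, (π ⟨n - 1, h⟩).1 + 1 = k}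

/-! ### The local form of avoidance -/

/-- The condition on a word `f 0, …, f (n - 1)` that, for distinct entries, is equivalent to
avoiding 1-23 and 21-3: each entry but the last is either an ascent
bottom smaller than all its predecessors, or a descent top larger than all its successors. Only the
values of `f` below `n` matter. -/
def IsGood (n : ℕ) (f : ℕ → ℕ) : Prop :=
  ∀ i, i + 1 < n → (f i < f (i + 1) ∧ ∀ j, j < i → f i < f j) ∨
    (f (i + 1) < f i ∧ ∀ j, i < j → j < n → f j < f i)

/-- The one-line notation of `π` as a function on `ℕ`, with value `0` outside the range. -/
def word {n : ℕ} (π : Equiv.Perm (Fin n)) (i : ℕ) : ℕ :=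
  if h : i < n then (π ⟨i, h⟩).1 else 0

lemma word_of_lt {n : ℕ} (π : Equiv.Perm (Fin n)) {i : ℕ} (h : i < n) :
    word π i = (π ⟨i, h⟩).1 := dif_pos h

lemma word_inj {n : ℕ} (π : Equiv.Perm (Fin n)) {i j : ℕ} (hi : i < n) (hj : j < n)
    (h : word π i = word π j) : i = j := by
  rw [word_of_lt π hi, word_of_lt π hj] at h
  simpa using π.injective (Fin.ext h)

lemma word_surj {n : ℕ} (π : Equiv.Perm (Fin n)) {v : ℕ} (hv : v < n) :
    ∃ i, i < n ∧ word π i = v := by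
  refine ⟨(π.symm ⟨v, hv⟩).1, (π.symm ⟨v, hv⟩).2, ?_⟩
  rw [word_of_lt π (π.symm ⟨v, hv⟩).2]
  simp

lemma avoids_iff_isGood {n : ℕ} (π : Equiv.Perm (Fin n)) :
    (Avoids1d23 π ∧ Avoids21d3 π) ↔ IsGood n (word π) := by
  constructor
  · rintro ⟨h1, h2⟩ i hi
    have hi' : i < n := by omega
    rcases lt_trichotomy (word π i) (word π (i + 1)) with h | h | h
    · refine Or.inl ⟨h, fun j hj => ?_⟩
      have hj' : j < n := by omega
      by_contra hc
      have hne : word π j ≠ word π i := fun he => by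
        have := word_inj π hj' hi' he
        omega
      apply h1
      refine ⟨⟨j, hj'⟩, ⟨i, hi'⟩, hi, hj, ?_, ?_⟩
      · rw [Fin.lt_def, ← word_of_lt, ← word_of_lt]; omega
      · rw [Fin.lt_def, ← word_of_lt, ← word_of_lt]; exact h
    · have := word_inj π hi' hi h
      omega
    · refine Or.inr ⟨h, fun j hij hj => ?_⟩
      by_contra hc
      have hne : word π j ≠ word π i := fun he => by
        have := word_inj π hj hi' he
        omega
      have hij' : i + 1 < j := by
        rcases Nat.lt_or_eq_of_le (Nat.succ_le_of_lt hij) with h' | h'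
        · exact h'
        · subst h'; exact absurd h hc
      apply h2
      refine ⟨⟨i, hi'⟩, ⟨j, hj⟩, hi, hij', ?_, ?_⟩
      · rw [Fin.lt_def, ← word_of_lt, ← word_of_lt]; exact h
      · rw [Fin.lt_def, ← word_of_lt, ← word_of_lt]; omega
  · intro hg
    constructor
    · rintro ⟨i, j, hj, hij, h1, h2⟩
      rw [Fin.lt_def] at hij h1 h2
      have e1 := word_of_lt π i.2
      have e2 := word_of_lt π j.2
      have e3 := word_of_lt π hj
      rcases hg j hj with ⟨_, h⟩ | ⟨h, _⟩
      · have := h i hij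
        simp only [Fin.eta] at e1 e2
        omega
      · simp only [Fin.eta] at e2
        omega
    · rintro ⟨i, j, hi, hij, h1, h2⟩
      rw [Fin.lt_def] at h1 h2
      have e1 := word_of_lt π i.2
      have e2 := word_of_lt π j.2
      have e3 := word_of_lt π hi
      simp only [Fin.eta] at e1 e2
      rcases hg i hi with ⟨h, _⟩ | ⟨_, h⟩
      · omega
      · have := h j (by omega) j.2
        omega

/-! ### Insertion of an entry -/

/-- The permutation of `Fin (n + 1)` whose one-line notation has `q` in position `p` and is
order-isomorphic to `σ` elsewhere. -/
def insertAt {n : ℕ} (p q : Fin (n + 1)) (σ : Equiv.Perm (Fin n)) : Equiv.Perm (Fin (n + 1)) :=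
  (finSuccEquiv' p).trans ((Equiv.optionCongr σ).trans (finSuccEquiv' q).symm)

lemma insertAt_self {n : ℕ} (p q : Fin (n + 1)) (σ : Equiv.Perm (Fin n)) :
    insertAt p q σ p = q := by
  simp [insertAt]

lemma insertAt_succAbove {n : ℕ} (p q : Fin (n + 1)) (σ : Equiv.Perm (Fin n)) (i : Fin n) :
    insertAt p q σ (p.succAbove i) = q.succAbove (σ i) := by
  simp [insertAt]

lemma insertAt_injective {n : ℕ} (p q : Fin (n + 1)) : Function.Injective (insertAt p q) := by
  intro σ τ h
  ext i
  have := insertAt_succAbove p q σ i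
  rw [h, insertAt_succAbove] at this
  rw [Fin.succAbove_right_injective this]

lemma exists_insertAt {n : ℕ} (p q : Fin (n + 1)) (π : Equiv.Perm (Fin (n + 1))) (h : π p = q) :
    ∃ σ, insertAt p q σ = π := by
  set e : Option (Fin n) ≃ Option (Fin n) :=
    (finSuccEquiv' p).symm.trans (π.trans (finSuccEquiv' q)) with he
  have hn : e none = none := by simp [he, h]
  refine ⟨Equiv.removeNone e, ?_⟩
  have h1 := map_equiv_removeNone e
  rw [hn, Equiv.swap_self] at h1
  rw [insertAt, h1]
  ext x
  simp [he]

/-- The order embedding of `ℕ` into itself that omits the value `q`. -/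
def skip (q v : ℕ) : ℕ := if v < q then v else v + 1

lemma succAbove_val {n : ℕ} (q : Fin (n + 1)) (v : Fin n) :
    (q.succAbove v).1 = skip q.1 v.1 := by
  simp only [Fin.succAbove, skip, Fin.lt_def, Fin.val_castSucc]
  split_ifs <;> simp

lemma word_insertAt_self {n : ℕ} (p q : Fin (n + 1)) (σ : Equiv.Perm (Fin n)) :
    word (insertAt p q σ) p.1 = q.1 := by
  rw [word_of_lt _ p.2, Fin.eta, insertAt_self]

lemma word_insertAt_skip {n : ℕ} (p q : Fin (n + 1)) (σ : Equiv.Perm (Fin n)) {i : ℕ}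
    (hi : i < n) : word (insertAt p q σ) (skip p.1 i) = skip q.1 (word σ i) := by
  have h := insertAt_succAbove p q σ ⟨i, hi⟩
  have e : skip p.1 i = (p.succAbove ⟨i, hi⟩).1 := (succAbove_val p ⟨i, hi⟩).symm
  rw [e, word_of_lt _ (p.succAbove ⟨i, hi⟩).2, Fin.eta, h, succAbove_val, word_of_lt σ hi]

/-- Insertion of `q` in position `p` is a bijection onto the permutations with `π p = q`. -/
lemma card_insertAt {n : ℕ} (p q : Fin (n + 1)) (P : Equiv.Perm (Fin n) → Prop)
    (Q : Equiv.Perm (Fin (n + 1)) → Prop) (h : ∀ σ, P σ ↔ Q (insertAt p q σ)) :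
    Nat.card {σ // P σ} = Nat.card {π : Equiv.Perm (Fin (n + 1)) // π p = q ∧ Q π} := by
  apply Nat.card_eq_of_bijective
    (fun σ : {σ // P σ} => (⟨insertAt p q σ.1, insertAt_self p q σ.1, (h σ.1).1 σ.2⟩ :
      {π : Equiv.Perm (Fin (n + 1)) // π p = q ∧ Q π}))
  constructor
  · intro σ τ hst
    exact Subtype.ext (insertAt_injective p q (congrArg Subtype.val hst))
  · rintro ⟨π, hp, hQ⟩
    obtain ⟨σ, rfl⟩ := exists_insertAt p q π hp
    exact ⟨⟨σ, (h σ).2 hQ⟩, rfl⟩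

lemma card_split {α : Type*} [Finite α] (P Q : α → Prop) :
    Nat.card {x // P x} = Nat.card {x // Q x ∧ P x} + Nat.card {x // ¬ Q x ∧ P x} := by
  classical
  have := Fintype.ofFinite α
  simp only [Nat.card_eq_fintype_card, Fintype.card_subtype]
  rw [← Finset.card_filter_add_card_filter_not (s := Finset.univ.filter P) Q,
    Finset.filter_filter, Finset.filter_filter]
  simp only [and_comm]

lemma a_eq (n k : ℕ) :
    a (n + 1) (k + 1) =
      Nat.card {π : Equiv.Perm (Fin (n + 1)) // IsGood (n + 1) (word π) ∧ word π n = k} := by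
  unfold a
  apply Nat.card_congr
  apply Equiv.subtypeEquivRight
  intro π
  rw [← and_assoc, avoids_iff_isGood, word_of_lt π (Nat.lt_succ_self n)]
  simp

/-! ### Insertion and exchange preserve avoidance -/

/-- Inserting the value `c + 2` just before a last entry `c + 1` preserves and reflects
avoidance. -/
lemma isGood_insert_one {N c : ℕ} {f g : ℕ → ℕ} (hg : g (N + 1) = c + 1) (hne : g N ≠ c + 1)
    (hf : ∀ i, i ≤ N → f i = skip (c + 2) (g i)) (hf1 : f (N + 1) = c + 2)
    (hf2 : f (N + 2) = c + 1) : IsGood (N + 2) g ↔ IsGood (N + 3) f := by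
  have lt_iff : ∀ i j, i ≤ N → j ≤ N → (f i < f j ↔ g i < g j) := by
    intro i j hi hj
    rw [hf i hi, hf j hj]; unfold skip; split_ifs <;> omega
  have top : ∀ i, i ≤ N → (c + 2 < f i ↔ c + 1 < g i) := by
    intro i hi
    rw [hf i hi]; unfold skip; split_ifs <;> omega
  have bot : f N < c + 2 ↔ g N < c + 1 := by
    rw [hf N le_rfl]; unfold skip; split_ifs <;> omega
  have low : ∀ i, i ≤ N → (c + 1 < f i ↔ c + 1 < g i) := by
    intro i hi
    rw [hf i hi]; unfold skip; split_ifs <;> omega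
  constructor
  · intro h i hi
    rcases lt_trichotomy i (N + 1) with hlt | rfl | hgt
    · have hiN : i ≤ N := by omega
      rcases h i (by omega) with ⟨h1, h2⟩ | ⟨h1, h2⟩
      · refine Or.inl ⟨?_, fun j hj => (lt_iff i j hiN (by omega)).2 (h2 j hj)⟩
        rcases Nat.lt_or_eq_of_le hiN with h' | rfl
        · exact (lt_iff i (i + 1) hiN h').2 h1
        · rw [hf1, bot]; omega
      · have hlast : c + 1 < g i := hg ▸ h2 (N + 1) (by omega) (by omega)
        have key : ∀ j, i < j → j < N + 3 → f j < f i := by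
          intro j hij hj
          rcases Nat.lt_or_ge N j with hj' | hj'
          · have := (top i hiN).2 hlast
            obtain rfl | rfl : j = N + 1 ∨ j = N + 2 := by omega
            · omega
            · omega
          · exact (lt_iff j i hj' hiN).2 (h2 j hij (by omega))
        exact Or.inr ⟨key _ (by omega) (by omega), key⟩
    · refine Or.inr ⟨by show f (N + 2) < _; omega, fun j hj1 hj2 => ?_⟩
      obtain rfl : j = N + 2 := by omega
      omega
    · omega
  · intro h i hi
    have hiN : i ≤ N := by omega
    rcases h i (by omega) with ⟨h1, h2⟩ | ⟨h1, h2⟩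
    · refine Or.inl ⟨?_, fun j hj => (lt_iff i j hiN (by omega)).1 (h2 j hj)⟩
      rcases Nat.lt_or_eq_of_le hiN with h' | rfl
      · exact (lt_iff i (i + 1) hiN h').1 h1
      · rw [hg]; exact bot.1 (hf1 ▸ h1)
    · have key : ∀ j, i < j → j < N + 2 → g j < g i := by
        intro j hij hj
        rcases Nat.lt_or_ge N j with hj' | hj'
        · obtain rfl : j = N + 1 := by omega
          rw [hg]
          exact (low i hiN).1 (hf2 ▸ h2 (N + 2) (by omega) (by omega))
        · exact (lt_iff j i hj' hiN).1 (h2 j hij (by omega))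
      exact Or.inr ⟨key _ (by omega) (by omega), key⟩

/-- Inserting the new value `c + 2` followed by a new minimum just before the last entry, which
becomes `c + 1`, preserves and reflects avoidance. -/
lemma isGood_insert_two {N c : ℕ} {f g : ℕ → ℕ} (hg : g N = c) (hne : ∀ i, i < N → g i ≠ c)
    (hf : ∀ i, i < N → f i = skip (c + 2) (g i + 1)) (hf0 : f N = c + 2)
    (hf1 : f (N + 1) = 0) (hf2 : f (N + 2) = c + 1) :
    IsGood (N + 1) g ↔ IsGood (N + 3) f := by
  have lt_iff : ∀ i j, i ≤ N → j ≤ N → (f i < f j ↔ g i < g j) := by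
    have aux : ∀ i, i ≤ N → f i = if g i < c then g i + 1 else g i + 2 := by
      intro i hi
      rcases Nat.lt_or_eq_of_le hi with h | rfl
      · have := hne i h
        rw [hf i h]; unfold skip; split_ifs <;> omega
      · rw [hf0, hg]; simp
    intro i j hi hj
    rw [aux i hi, aux j hj]; split_ifs <;> omega
  constructor
  · intro h i hi
    rcases lt_trichotomy i N with hlt | rfl | hgt
    · rcases h i (by omega) with ⟨h1, h2⟩ | ⟨h1, h2⟩
      · exact Or.inl ⟨(lt_iff _ _ hlt.le hlt).2 h1,
          fun j hj => (lt_iff i j hlt.le (by omega)).2 (h2 j hj)⟩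
      · refine Or.inr ⟨(lt_iff _ _ hlt hlt.le).2 h1, fun j hij hj => ?_⟩
        rcases Nat.lt_or_ge N j with hj' | hj'
        · have := (lt_iff N i le_rfl hlt.le).2 (h2 N hlt (by omega))
          obtain rfl | rfl : j = N + 1 ∨ j = N + 2 := by omega
          · omega
          · omega
        · exact (lt_iff j i hj' hlt.le).2 (h2 j hij (by omega))
    · refine Or.inr ⟨by omega, fun j hj1 hj2 => ?_⟩
      obtain rfl | rfl : j = i + 1 ∨ j = i + 2 := by omega
      · omega
      · omega
    · obtain rfl : i = N + 1 := by omega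
      refine Or.inl ⟨by show _ < f (N + 2); omega, fun j hj => ?_⟩
      rcases Nat.lt_or_eq_of_le (Nat.le_of_lt_succ hj) with h' | rfl
      · rw [hf1, hf j h']; unfold skip; split_ifs <;> omega
      · omega
  · intro h i hi
    have hlt : i < N := by omega
    rcases h i (by omega) with ⟨h1, h2⟩ | ⟨h1, h2⟩
    · exact Or.inl ⟨(lt_iff _ _ hlt.le hlt).1 h1,
        fun j hj => (lt_iff i j hlt.le (by omega)).1 (h2 j hj)⟩
    · exact Or.inr ⟨(lt_iff _ _ hlt hlt.le).1 h1,
        fun j hij hj => (lt_iff j i (by omega) hlt.le).1 (h2 j hij (by omega))⟩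

/-- Exchanging the values `c + 1` and `c + 2`, where `c + 2` is the last entry, turns the avoiders
`f` into the avoiders `f'` that end neither in `c + 2, c + 1` nor in `c + 2, 0, c + 1`. Here `f'`
is `f` after the exchange, `z` is the position of `0`, and `j` is the position other than the last
whose value is exchanged. -/
lemma isGood_exchange {N c z j : ℕ} {f f' : ℕ → ℕ}
    (hj : j < N + 2) (hz : z < N + 2) (hfz' : f' z = 0)
    (hfj : f j = c + 1) (hfj' : f' j = c + 2) (hl : f (N + 2) = c + 2) (hl' : f' (N + 2) = c + 1)
    (heq : ∀ i, i < N + 2 → i ≠ j → f i = f' i ∧ f' i ≠ c + 1 ∧ f' i ≠ c + 2)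
    (hinj : ∀ i, i < N + 2 → f' i = 0 → i = z) :
    IsGood (N + 3) f ↔
      (IsGood (N + 3) f' ∧ f' (N + 1) ≠ c + 2 ∧ ¬ (f' N = c + 2 ∧ f' (N + 1) = 0)) := by
  have hzj : z ≠ j := by rintro rfl; omega
  have hfz : f z = 0 := by rw [(heq z hz hzj).1, hfz']
  -- The relative order of any two entries is the same in `f` and `f'`, except for `j` and the end.
  have lt_iff : ∀ x y, x < N + 3 → y < N + 3 → ¬ (x = j ∧ y = N + 2) → ¬ (x = N + 2 ∧ y = j) →
      (f x < f y ↔ f' x < f' y) := by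
    have cls : ∀ x, x < N + 3 → x = j ∨ x = N + 2 ∨
        (f x = f' x ∧ f' x ≠ c + 1 ∧ f' x ≠ c + 2) := by
      intro x hx
      by_cases h1 : x = j
      · exact Or.inl h1
      · by_cases h2 : x = N + 2
        · exact Or.inr (Or.inl h2)
        · exact Or.inr (Or.inr (heq x (by omega) h1))
    intro x y hx hy h1 h2
    rcases cls x hx with rfl | rfl | hx' <;> rcases cls y hy with rfl | rfl | hy' <;> omega
  constructor
  · intro h
    have hj1 : j ≠ N + 1 := by
      rintro rfl
      rcases h (N + 1) (by omega) with ⟨_, h2⟩ | ⟨_, h2⟩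
      · have := h2 z (by omega)
        omega
      · have := h2 (N + 2) (by omega) (by omega)
        omega
    have hjasc : f j < f (j + 1) ∧ ∀ i, i < j → f j < f i := by
      rcases h j (by omega) with h1 | ⟨_, h2⟩
      · exact h1
      · have := h2 (N + 2) (by omega) (by omega)
        omega
    refine ⟨fun i hi => ?_, ?_, ?_⟩
    · by_cases hij : i = j
      · subst hij
        exact Or.inl ⟨(lt_iff _ _ (by omega) (by omega) (by omega) (by omega)).1 hjasc.1,
          fun x hx => (lt_iff _ _ (by omega) (by omega) (by omega) (by omega)).1 (hjasc.2 x hx)⟩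
      · rcases h i hi with ⟨h1, h2⟩ | ⟨h1, h2⟩
        · exact Or.inl ⟨(lt_iff _ _ (by omega) (by omega) (by omega) (by omega)).1 h1,
            fun x hx => (lt_iff _ _ (by omega) (by omega) (by omega) (by omega)).1 (h2 x hx)⟩
        · exact Or.inr ⟨(lt_iff _ _ (by omega) (by omega) (by omega) (by omega)).1 h1,
            fun x hx hx' =>
              (lt_iff _ _ (by omega) (by omega) (by omega) (by omega)).1 (h2 x hx hx')⟩
    · exact (heq (N + 1) (by omega) hj1.symm).2.2
    · rintro ⟨hN, hN1⟩
      have hjN : j = N := by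
        by_contra hne
        exact (heq N (by omega) (Ne.symm hne)).2.2 hN
      subst hjN
      have := (heq (j + 1) (by omega) hj1.symm).1
      omega
  · rintro ⟨h, hA, hB⟩
    have hj1 : j ≠ N + 1 := by rintro rfl; exact hA hfj'
    -- If `c + 2` were a descent top, then `f'` would end in `c + 2, 0, c + 1`.
    have hjasc : f' j < f' (j + 1) ∧ ∀ i, i < j → f' j < f' i := by
      rcases h j (by omega) with h1 | ⟨_, hmax⟩
      · exact h1
      · exfalso
        have small : ∀ i, j < i → i < N + 2 →
            f' i < f' (i + 1) ∧ ∀ x, x < i → f' i < f' x := by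
          intro i hi1 hi2
          rcases h i (by omega) with h1 | ⟨_, h2⟩
          · exact h1
          · have e1 := h2 (N + 2) (by omega) (by omega)
            have e2 := hmax i hi1 (by omega)
            omega
        have s1 := small (j + 1) (by omega) (by omega)
        by_cases hjN : j = N
        · subst hjN
          apply hB
          refine ⟨hfj', ?_⟩
          have hz1 : z = j + 1 := by
            by_contra hne
            have := s1.2 z (by omega)
            omega
          rw [← hz1, hfz']
        · have s2 := (small (j + 1 + 1) (by omega) (by omega)).2 (j + 1) (by omega)
          omega
    intro i hi
    by_cases hij : i = j
    · subst hij
      exact Or.inl ⟨(lt_iff _ _ (by omega) (by omega) (by omega) (by omega)).2 hjasc.1,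
        fun x hx => (lt_iff _ _ (by omega) (by omega) (by omega) (by omega)).2 (hjasc.2 x hx)⟩
    · rcases h i hi with ⟨h1, h2⟩ | ⟨h1, h2⟩
      · exact Or.inl ⟨(lt_iff _ _ (by omega) (by omega) (by omega) (by omega)).2 h1,
          fun x hx => (lt_iff _ _ (by omega) (by omega) (by omega) (by omega)).2 (h2 x hx)⟩
      · exact Or.inr ⟨(lt_iff _ _ (by omega) (by omega) (by omega) (by omega)).2 h1,
          fun x hx hx' =>
            (lt_iff _ _ (by omega) (by omega) (by omega) (by omega)).2 (h2 x hx hx')⟩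

/-! ### Counting -/

/-- The avoiders ending in `c + 2, c + 1` arise by inserting `c + 2` into those of length `N + 2`
with last value `c + 1`. -/
lemma card_insert_one (N c : ℕ) (hc : c ≤ N) :
    a (N + 2) (c + 2) = Nat.card {π : Equiv.Perm (Fin (N + 3)) //
      word π (N + 1) = c + 2 ∧ IsGood (N + 3) (word π) ∧ word π (N + 2) = c + 1} := by
  rw [a_eq]
  have key := card_insertAt (n := N + 2) ⟨N + 1, by omega⟩ ⟨c + 2, by omega⟩
    (fun σ => IsGood (N + 2) (word σ) ∧ word σ (N + 1) = c + 1)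
    (fun π => IsGood (N + 3) (word π) ∧ word π (N + 2) = c + 1) ?_
  · rw [key]
    apply Nat.card_congr
    apply Equiv.subtypeEquivRight
    intro π
    rw [word_of_lt π (show N + 1 < N + 3 by omega), Fin.ext_iff]
  · intro σ
    have h2 := word_insertAt_skip ⟨N + 1, by omega⟩ ⟨c + 2, by omega⟩ σ
      (show N + 1 < N + 2 by omega)
    have e2 : skip (N + 1) (N + 1) = N + 2 := by simp [skip]
    simp only [e2] at h2
    have hl : word (insertAt ⟨N + 1, by omega⟩ ⟨c + 2, by omega⟩ σ) (N + 2) = c + 1 ↔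
        word σ (N + 1) = c + 1 := by
      rw [h2]; unfold skip; split_ifs <;> omega
    rw [hl]
    apply and_congr_left
    intro hlast
    refine isGood_insert_one (c := c) hlast ?_ ?_ (word_insertAt_self _ _ σ) (hl.2 hlast)
    · intro h
      have := word_inj σ (show N < N + 2 by omega) (show N + 1 < N + 2 by omega)
        (h.trans hlast.symm)
      omega
    · intro i hi
      have := word_insertAt_skip ⟨N + 1, by omega⟩ ⟨c + 2, by omega⟩ σ
        (show i < N + 2 by omega)
      have e : skip (N + 1) i = i := by unfold skip; split_ifs <;> omega
      simpa only [e] using this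

/-- The avoiders ending in `c + 2, 0, c + 1` arise by inserting `0` and `c + 2` into those of length
`N + 1` with last value `c`. -/
lemma card_insert_two (N c : ℕ) (hc : c ≤ N) :
    a (N + 1) (c + 1) = Nat.card {π : Equiv.Perm (Fin (N + 3)) //
      (word π N = c + 2 ∧ word π (N + 1) = 0) ∧
        IsGood (N + 3) (word π) ∧ word π (N + 2) = c + 1} := by
  rw [a_eq]
  have hN2 : N < N + 2 := by omega
  have hN3 : N < N + 3 := by omega
  have hc3 : c + 2 < N + 3 := by omega
  have eN : ∀ i, i < N → skip N i = i := fun i hi => by simp [skip, hi]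
  have eN0 : skip N N = N + 1 := by simp [skip]
  have eN1 : skip N (N + 1) = N + 2 := by simp [skip]
  have s0 : ∀ v, skip 0 v = v + 1 := fun v => by simp [skip]
  -- The minimum is inserted first, in position `N`; inserting `c + 2` there moves it to `N + 1`.
  have key1 := card_insertAt (n := N + 1) ⟨N, hN2⟩ 0
    (fun σ => IsGood (N + 1) (word σ) ∧ word σ N = c)
    (fun τ => IsGood (N + 3) (word (insertAt ⟨N, hN3⟩ ⟨c + 2, hc3⟩ τ)) ∧
      word (insertAt ⟨N, hN3⟩ ⟨c + 2, hc3⟩ τ) (N + 2) = c + 1) ?_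
  · have key2 := card_insertAt (n := N + 2) ⟨N, hN3⟩ ⟨c + 2, hc3⟩
      (fun τ => τ ⟨N, hN2⟩ = 0 ∧ IsGood (N + 3) (word (insertAt ⟨N, hN3⟩ ⟨c + 2, hc3⟩ τ)) ∧
        word (insertAt ⟨N, hN3⟩ ⟨c + 2, hc3⟩ τ) (N + 2) = c + 1)
      (fun π => word π (N + 1) = 0 ∧ IsGood (N + 3) (word π) ∧ word π (N + 2) = c + 1) ?_
    · rw [key1, key2]
      apply Nat.card_congr
      apply Equiv.subtypeEquivRight
      intro π
      rw [word_of_lt π hN3, Fin.ext_iff, and_assoc]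
    · intro τ
      apply and_congr_left
      intro _
      have h := word_insertAt_skip ⟨N, hN3⟩ ⟨c + 2, hc3⟩ τ hN2
      simp only [eN0] at h
      rw [h, Fin.ext_iff, Fin.val_zero, ← word_of_lt τ hN2]
      unfold skip
      split_ifs
      · rfl
      · rw [iff_false]
        omega
  · intro σ
    set τ := insertAt ⟨N, hN2⟩ 0 σ with hτ
    set π := insertAt ⟨N, hN3⟩ ⟨c + 2, hc3⟩ τ with hπ
    have t0 : word τ N = 0 := word_insertAt_self _ _ σ
    have t1 : word τ (N + 1) = word σ N + 1 := by
      have := word_insertAt_skip ⟨N, hN2⟩ 0 σ (show N < N + 1 by omega)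
      simpa only [eN0, Fin.val_zero, s0] using this
    have t2 : ∀ i, i < N → word τ i = word σ i + 1 := by
      intro i hi
      have := word_insertAt_skip ⟨N, hN2⟩ 0 σ (show i < N + 1 by omega)
      simpa only [eN i hi, Fin.val_zero, s0] using this
    have p0 : word π N = c + 2 := word_insertAt_self _ _ τ
    have p1 : word π (N + 1) = 0 := by
      have := word_insertAt_skip ⟨N, hN3⟩ ⟨c + 2, hc3⟩ τ hN2
      simp only [eN0, t0] at this
      rw [this]; simp [skip]
    have p2 : word π (N + 2) = skip (c + 2) (word σ N + 1) := by
      have := word_insertAt_skip ⟨N, hN3⟩ ⟨c + 2, hc3⟩ τ (show N + 1 < N + 2 by omega)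
      simpa only [eN1, t1] using this
    have p3 : ∀ i, i < N → word π i = skip (c + 2) (word σ i + 1) := by
      intro i hi
      have := word_insertAt_skip ⟨N, hN3⟩ ⟨c + 2, hc3⟩ τ (show i < N + 2 by omega)
      simpa only [eN i hi, t2 i hi] using this
    have hl : word π (N + 2) = c + 1 ↔ word σ N = c := by
      rw [p2]; unfold skip; split_ifs <;> omega
    rw [hl]
    apply and_congr_left
    intro hlast
    refine isGood_insert_two hlast ?_ p3 p0 p1 (hl.2 hlast)
    intro i hi h
    have := word_inj σ (show i < N + 1 by omega) (show N < N + 1 by omega) (h.trans hlast.symm)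
    omega

/-- Exchanging the values `c + 1` and `c + 2` matches the avoiders with last value `c + 2` with those
that have last value `c + 1` and end neither in `c + 2, c + 1` nor in `c + 2, 0, c + 1`. -/
lemma card_exchange (N c : ℕ) (hc : c ≤ N) :
    a (N + 3) (c + 3) = Nat.card {π : Equiv.Perm (Fin (N + 3)) //
      ¬ (word π N = c + 2 ∧ word π (N + 1) = 0) ∧ ¬ word π (N + 1) = c + 2 ∧
        IsGood (N + 3) (word π) ∧ word π (N + 2) = c + 1} := by
  rw [a_eq]
  have h1 : c + 1 < N + 3 := by omega
  have h2 : c + 2 < N + 3 := by omega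
  apply Nat.card_congr
  refine Equiv.subtypeEquiv (Equiv.mulLeft (Equiv.swap ⟨c + 1, h1⟩ ⟨c + 2, h2⟩)) ?_
  intro π
  simp only [Equiv.coe_mulLeft]
  set π' := Equiv.swap (⟨c + 1, h1⟩ : Fin (N + 3)) ⟨c + 2, h2⟩ * π with hπ'
  have hw : ∀ i, i < N + 3 → word π' i =
      if word π i = c + 1 then c + 2 else if word π i = c + 2 then c + 1 else word π i := by
    intro i hi
    rw [word_of_lt π' hi, word_of_lt π hi, hπ', Equiv.Perm.mul_apply, Equiv.swap_apply_def]
    simp only [Fin.ext_iff]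
    split_ifs <;> rfl
  have hl : word π (N + 2) = c + 2 ↔ word π' (N + 2) = c + 1 := by
    rw [hw _ (by omega)]; split_ifs <;> omega
  have main : word π (N + 2) = c + 2 → (IsGood (N + 3) (word π) ↔ (IsGood (N + 3) (word π') ∧
      word π' (N + 1) ≠ c + 2 ∧ ¬ (word π' N = c + 2 ∧ word π' (N + 1) = 0))) := by
    intro hlast
    obtain ⟨j, hj, hjv⟩ := word_surj π h1
    obtain ⟨z, hz, hzv⟩ := word_surj π (show 0 < N + 3 by omega)
    have hj' : j ≠ N + 2 := by rintro rfl; omega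
    have hz' : z ≠ N + 2 := by rintro rfl; omega
    refine isGood_exchange (z := z) (j := j) (by omega) (by omega) ?_ hjv ?_ hlast (hl.1 hlast)
      ?_ ?_
    · rw [hw z hz, hzv]; simp
    · rw [hw j hj, hjv]; simp
    · intro i hi hij
      have n1 : word π i ≠ c + 1 := fun h => hij (word_inj π (by omega) hj (h.trans hjv.symm))
      have n2 : word π i ≠ c + 2 := fun h => by
        have := word_inj π (show i < N + 3 by omega) (show N + 2 < N + 3 by omega)
          (h.trans hlast.symm)
        omega
      rw [hw i (by omega), if_neg n1, if_neg n2]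
      exact ⟨rfl, n1, n2⟩
    · intro i hi h
      apply word_inj π (show i < N + 3 by omega) hz
      rw [hw i (by omega)] at h
      split_ifs at h
      omega
  rw [← hl]
  tauto

theorem a_recurrence (n k : ℕ) (hn : 3 ≤ n) (hk3 : 3 ≤ k) (hkn : k ≤ n) :
    a n (k - 1) = a n k + a (n - 1) (k - 1) + a (n - 2) (k - 2) := by
  obtain ⟨N, rfl⟩ := Nat.exists_eq_add_of_le' hn
  obtain ⟨c, rfl⟩ := Nat.exists_eq_add_of_le' hk3
  have hc : c ≤ N := by omega
  change a (N + 3) (c + 2) = a (N + 3) (c + 3) + a (N + 2) (c + 2) + a (N + 1) (c + 1)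
  rw [card_insert_one N c hc, card_insert_two N c hc, card_exchange N c hc, a_eq,
    card_split _ (fun π => word π (N + 1) = c + 2),
    card_split (fun π : Equiv.Perm (Fin (N + 3)) => ¬ word π (N + 1) = c + 2 ∧
      IsGood (N + 3) (word π) ∧ word π (N + 2) = c + 1)
      (fun π => word π N = c + 2 ∧ word π (N + 1) = 0)]
  -- Ending in `c + 2, 0, c + 1` already excludes `c + 2` from the second to last position.
  have hB : Nat.card {π : Equiv.Perm (Fin (N + 3)) //
      (word π N = c + 2 ∧ word π (N + 1) = 0) ∧ ¬ word π (N + 1) = c + 2 ∧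
        IsGood (N + 3) (word π) ∧ word π (N + 2) = c + 1} =
      Nat.card {π : Equiv.Perm (Fin (N + 3)) //
      (word π N = c + 2 ∧ word π (N + 1) = 0) ∧
        IsGood (N + 3) (word π) ∧ word π (N + 2) = c + 1} := by
    apply Nat.card_congr
    apply Equiv.subtypeEquivRight
    intro π
    constructor
    · rintro ⟨h1, _, h3⟩
      exact ⟨h1, h3⟩
    · rintro ⟨h1, h3⟩
      exact ⟨h1, by omega, h3⟩
  rw [hB]
  ring
end
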